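/- Let d ≥ 2 be an integer. Let (M_n(1),…,M_n(m)) be the occupancy counts of the uniform occupancy model with n balls and m urns, let p = 1/(m−1), and for i ≠ j define a_{n,m}(i,j) = C(M_n(i)−d, d−M_n(j)) · p^{d−M_n(j)} · (1−p)^{M_n(i)+M_n(j)−2d} · 1{M_n(i)+M_n(j) ≥ 2d, M_n(j) < d}. Then there exist an integer n₁, a real r₁ > 0, and a constant C, all depending only on d, such that for all n ≥ n₁ and all m ≥ 2 with r_{n,m} ≥ r₁, Var(Σ_{1 ≤ i,j ≤ m, i≠j} a_{n,m}(i,j)) ≤ C·n·[1 + (n/m)⁴]. -/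

import Mathlib

open MeasureTheory ProbabilityTheory

/-- The uniform occupancy model: `n` balls are placed independently and uniformly at
random into `m` urns. -/
noncomputable def occ (n m : ℕ) : Measure (Fin n → Fin m) :=
  (Fintype.card (Fin n → Fin m) : ENNReal)⁻¹ • Measure.count

/-- The number of balls in urn `i`. -/
def ballCount {n m : ℕ} (ω : Fin n → Fin m) (i : Fin m) : ℕ :=
  (Finset.univ.filter fun b => ω b = i).card

/-- The number of urns containing exactly `d` balls. -/
def urnCount (d : ℕ) {n m : ℕ} (ω : Fin n → Fin m) : ℕ :=
  (Finset.univ.filter fun i => ballCount ω i = d).card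

/-- `μ_{n,m}`, the mean number of urns containing exactly `d` balls. -/
noncomputable def occMean (d n m : ℕ) : ℝ :=
  ∫ ω, (urnCount d ω : ℝ) ∂(occ n m)


/-- `σ²_{n,m}`, the variance of the number of urns containing exactly `d` balls. -/
noncomputable def occVar (d n m : ℕ) : ℝ :=
  variance (fun ω => (urnCount d ω : ℝ)) (occ n m)

/-- `r_{n,m} = σ_{n,m} / (1 + (n/m)³)`. -/
noncomputable def occR (d n m : ℕ) : ℝ :=
  Real.sqrt (occVar d n m) / (1 + ((n : ℝ) / m) ^ 3)

/-- The summand `a_{n,m}(i,j)` of Lemma 3.3, Equation (3.14). -/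
noncomputable def aTerm (d n m : ℕ) (ω : Fin n → Fin m) (i j : Fin m) : ℝ :=
  if 2 * d ≤ ballCount ω i + ballCount ω j ∧ ballCount ω j < d then
    ((ballCount ω i - d).choose (d - ballCount ω j) : ℝ)
      * (1 / ((m : ℝ) - 1)) ^ (d - ballCount ω j)
      * (1 - 1 / ((m : ℝ) - 1)) ^ (ballCount ω i + ballCount ω j - 2 * d)
  else 0

section EfronStein

/-- Efron–Stein inequality for the uniform distribution on `Fin n → Fin m`, in unnormalised
form: `g k` is any function which does not depend on the `k`-th coordinate. -/
theorem sum_sq_sub_sq_sum_div_le {m : ℕ} (hm : 0 < m) (n : ℕ) (f : (Fin n → Fin m) → ℝ)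
    (g : Fin n → (Fin n → Fin m) → ℝ)
    (hg : ∀ k ω a, g k (Function.update ω k a) = g k ω) :
    ∑ ω, f ω ^ 2 - (∑ ω, f ω) ^ 2 / (m : ℝ) ^ n ≤ ∑ k, ∑ ω, (f ω - g k ω) ^ 2 := by
  induction n with
  | zero => simp
  | succ n ih =>
    have hmR : (0 : ℝ) < m := by exact_mod_cast hm
    have hN : (0 : ℝ) < (m : ℝ) ^ n := by positivity
    have split (F : (Fin (n + 1) → Fin m) → ℝ) :
        ∑ ω, F ω = ∑ x : Fin m, ∑ ω : Fin n → Fin m, F (Fin.cons x ω) := by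
      rw [← (Fin.consEquiv fun _ => Fin m).sum_comp, Fintype.sum_prod_type]
      rfl
    have hsucc (x : Fin m) := ih (fun ω => f (Fin.cons x ω))
      (fun k ω => g k.succ (Fin.cons x ω)) fun k ω a => by
        rw [Fin.cons_update]; exact hg _ _ _
    let x₀ : Fin m := ⟨0, hm⟩
    have hzero (x : Fin m) (ω : Fin n → Fin m) :
        g 0 (Fin.cons x ω) = g 0 (Fin.cons x₀ ω) := by
      rw [← hg 0 (Fin.cons x₀ ω) x, Fin.update_cons_zero]
    set c : ℝ := ∑ ω : Fin n → Fin m, g 0 (Fin.cons x₀ ω) with hc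
    set h : Fin m → ℝ := fun x => ∑ ω : Fin n → Fin m, f (Fin.cons x ω) with hh
    have hcs (x : Fin m) :
        (h x - c) ^ 2 / (m : ℝ) ^ n
          ≤ ∑ ω : Fin n → Fin m, (f (Fin.cons x ω) - g 0 (Fin.cons x ω)) ^ 2 := by
      rw [div_le_iff₀ hN, hh, hc, ← Finset.sum_sub_distrib]
      have := sq_sum_le_card_mul_sum_sq (s := (Finset.univ : Finset (Fin n → Fin m)))
        (f := fun ω => f (Fin.cons x ω) - g 0 (Fin.cons x₀ ω))
      simp only [Finset.card_univ, Fintype.card_fun, Fintype.card_fin, Nat.cast_pow] at this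
      simp only [hzero x]
      linarith
    have hvar : ∑ x, h x ^ 2 - (∑ x, h x) ^ 2 / m ≤ ∑ x, (h x - c) ^ 2 := by
      have hexp : ∑ x, (h x - c) ^ 2 = ∑ x, h x ^ 2 - 2 * c * ∑ x, h x + m * c ^ 2 := by
        simp only [sub_sq, Finset.sum_add_distrib, Finset.sum_sub_distrib, Finset.mul_sum]
        simp [mul_right_comm]
      have hsq : 0 ≤ (∑ x, h x - m * c) ^ 2 / m := by positivity
      have : (∑ x, h x - m * c) ^ 2 / m
          = (∑ x, h x) ^ 2 / m - 2 * c * ∑ x, h x + m * c ^ 2 := by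
        field_simp
        ring
      linarith
    have hvar' := div_le_div_of_nonneg_right hvar hN.le
    rw [sub_div, div_div, Finset.sum_div, Finset.sum_div] at hvar'
    have h₁ := Finset.sum_le_sum fun x (_ : x ∈ Finset.univ) => hsucc x
    have h₂ := Finset.sum_le_sum fun x (_ : x ∈ Finset.univ) => hcs x
    have hcomm := Finset.sum_comm (s := Finset.univ) (t := Finset.univ)
      (f := fun (x : Fin m) (k : Fin n) =>
        ∑ ω : Fin n → Fin m, (f (Fin.cons x ω) - g k.succ (Fin.cons x ω)) ^ 2)
    rw [Finset.sum_sub_distrib, hcomm] at h₁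
    simp only [Fin.sum_univ_succ, split]
    rw [pow_succ' (m : ℝ) n]
    linarith

end EfronStein

section Moments

/-- Resampling one coordinate preserves the uniform distribution. -/
theorem sum_sum_update {n m : ℕ} (b : Fin n) (F : (Fin n → Fin m) → ℝ) :
    ∑ ω, ∑ a, F (Function.update ω b a) = m * ∑ ω, F ω := by
  have hinv : Function.Involutive
      fun q : (Fin n → Fin m) × Fin m => (Function.update q.1 b q.2, q.1 b) := by
    rintro ⟨ω, a⟩
    simp
  have h := Equiv.sum_comp (hinv.toPerm _) fun q => F q.1
  rw [Fintype.sum_prod_type, Fintype.sum_prod_type] at h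
  simpa [Finset.mul_sum] using h

theorem sum_ite_eq_mul {n m : ℕ} {b k : Fin n} (hbk : b ≠ k) (φ : (Fin n → Fin m) → ℝ)
    (hφ : ∀ ω a, φ (Function.update ω b a) = φ ω) :
    m * ∑ ω, (if ω b = ω k then 1 else 0) * φ ω = ∑ ω, φ ω := by
  rw [← sum_sum_update b]
  simp [hφ, hbk.symm]

theorem ballCount_eq_sum {n m : ℕ} (ω : Fin n → Fin m) (i : Fin m) :
    (ballCount ω i : ℝ) = ∑ b, if ω b = i then 1 else 0 := by
  simp [ballCount]

theorem sum_ballCount {n m : ℕ} (ω : Fin n → Fin m) : ∑ i, (ballCount ω i : ℝ) = n := by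
  simp_rw [ballCount_eq_sum]
  rw [Finset.sum_comm]
  simp

theorem sum_ite_eq_mul_ite_eq_le {n m : ℕ} (hm : 0 < m) (k b c : Fin n) :
    ∑ ω : Fin n → Fin m,
        (if ω b = ω k then (1 : ℝ) else 0) * (if ω c = ω k then 1 else 0)
      ≤ (m : ℝ) ^ n * (((if b = k then 1 else 0) + 1 / m) * ((if c = k then 1 else 0) + 1 / m)
          + (if b = c then 1 / (m : ℝ) else 0)) := by
  have hmR : (0 : ℝ) < m := by exact_mod_cast hm
  have hone : ∑ _ω : Fin n → Fin m, (1 : ℝ) = (m : ℝ) ^ n := by simp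
  have hsingle (e : Fin n) (he : e ≠ k) :
      ∑ ω : Fin n → Fin m, (if ω e = ω k then (1 : ℝ) else 0) = (m : ℝ) ^ n * (1 / m) := by
    have := sum_ite_eq_mul (m := m) he (fun _ => 1) (by simp)
    simp only [mul_one, hone] at this
    field_simp
    linarith
  have hinv : (0 : ℝ) < 1 / m := by positivity
  by_cases hb : b = k
  · subst hb
    by_cases hc : c = b
    · subst hc
      simp only [if_true, mul_one, hone]
      refine le_mul_of_one_le_right (by positivity) ?_
      nlinarith
    · simp only [if_true, one_mul, hsingle c hc, if_neg hc, if_neg (Ne.symm hc)]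
      gcongr
      nlinarith
  · by_cases hc : c = k
    · subst hc
      simp only [if_true, mul_one, hsingle b hb, if_neg hb]
      gcongr
      nlinarith
    · by_cases hbc : b = c
      · subst hbc
        simp only [← pow_two, ite_pow, one_pow, ne_eq, OfNat.ofNat_ne_zero, not_false_eq_true,
          zero_pow, hsingle b hb, if_neg hb, if_true]
        gcongr
        nlinarith
      · have := sum_ite_eq_mul (m := m) hb (fun ω => if ω c = ω k then 1 else 0) fun ω a => by
          simp [Function.update_of_ne (Ne.symm hbc), Function.update_of_ne (Ne.symm hb)]
        rw [hsingle c hc] at this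
        simp only [if_neg hb, if_neg hc, if_neg hbc, zero_add, add_zero]
        refine le_of_eq ?_
        rw [← mul_right_inj' hmR.ne', this]
        field_simp

/-- Second moment of the number of balls sharing the urn of ball `k`. -/
theorem sum_ballCount_sq_le {n m : ℕ} (hm : 0 < m) (k : Fin n) :
    ∑ ω : Fin n → Fin m, (ballCount ω (ω k) : ℝ) ^ 2
      ≤ (m : ℝ) ^ n * ((1 + (n : ℝ) / m) ^ 2 + (n : ℝ) / m) := by
  have h (ω : Fin n → Fin m) : (ballCount ω (ω k) : ℝ) ^ 2
      = ∑ b, ∑ c, (if ω b = ω k then (1 : ℝ) else 0) * (if ω c = ω k then 1 else 0) := by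
    rw [ballCount_eq_sum, pow_two, Finset.sum_mul_sum]
  simp_rw [h]
  rw [Finset.sum_comm]
  have hsum : ∑ b : Fin n, ((if b = k then (1 : ℝ) else 0) + 1 / m) = 1 + (n : ℝ) / m := by
    simp [Finset.sum_add_distrib, div_eq_mul_inv]
  calc _ = ∑ b, ∑ c, ∑ ω : Fin n → Fin m,
        (if ω b = ω k then (1 : ℝ) else 0) * (if ω c = ω k then 1 else 0) :=
        Finset.sum_congr rfl fun b _ => Finset.sum_comm
    _ ≤ ∑ b, ∑ c, (m : ℝ) ^ n *
          (((if b = k then 1 else 0) + 1 / m) * ((if c = k then 1 else 0) + 1 / m)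
          + (if b = c then 1 / (m : ℝ) else 0)) :=
        Finset.sum_le_sum fun b _ => Finset.sum_le_sum fun c _ =>
          sum_ite_eq_mul_ite_eq_le hm k b c
    _ = _ := by
        simp_rw [← Finset.mul_sum, Finset.sum_add_distrib, ← Finset.mul_sum, ← Finset.sum_mul,
          hsum]
        simp [pow_two, div_eq_mul_inv]

end Moments

section Kernel

/-- A binomial probability `P(Bin(k, p) = l)` with `l ≥ 1` is at most `k * p`. -/
theorem choose_mul_pow_mul_pow_le {p : ℝ} (hp₀ : 0 ≤ p) (hp₁ : p ≤ 1) {k l : ℕ} (hl : 1 ≤ l)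
    (hlk : l ≤ k) : (k.choose l : ℝ) * p ^ l * (1 - p) ^ (k - l) ≤ k * p := by
  obtain ⟨l, rfl⟩ : ∃ t, l = t + 1 := ⟨l - 1, by omega⟩
  obtain ⟨k, rfl⟩ : ∃ t, k = t + 1 := ⟨k - 1, by omega⟩
  have hq : 0 ≤ 1 - p := by linarith
  have hprob : (k.choose l : ℝ) * p ^ l * (1 - p) ^ (k - l) ≤ 1 := by
    have hsum := add_pow p (1 - p) k
    rw [add_sub_cancel, one_pow] at hsum
    calc _ = p ^ l * (1 - p) ^ (k - l) * (k.choose l : ℝ) := by ring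
      _ ≤ _ := Finset.single_le_sum (f := fun j => p ^ j * (1 - p) ^ (k - j) * (k.choose j : ℝ))
        (fun j _ => by positivity) (Finset.mem_range.2 (by omega))
      _ = 1 := hsum.symm
  have hchoose : ((k + 1).choose (l + 1) : ℝ) ≤ (k + 1 : ℕ) * (k.choose l : ℝ) := by
    have h := Nat.add_one_mul_choose_eq k l
    have : (k + 1).choose (l + 1) ≤ (k + 1) * k.choose l := by
      rw [h]; exact Nat.le_mul_of_pos_right _ l.succ_pos
    exact_mod_cast this
  have hsub : k + 1 - (l + 1) = k - l := by omega
  rw [hsub]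
  calc ((k + 1).choose (l + 1) : ℝ) * p ^ (l + 1) * (1 - p) ^ (k - l)
      ≤ (k + 1 : ℕ) * (k.choose l : ℝ) * p ^ (l + 1) * (1 - p) ^ (k - l) := by gcongr
    _ = (k + 1 : ℕ) * p * ((k.choose l : ℝ) * p ^ l * (1 - p) ^ (k - l)) := by ring
    _ ≤ (k + 1 : ℕ) * p := mul_le_of_le_one_right (by positivity) hprob

/-- `aTerm` as a function of the two occupancy counts. -/
noncomputable def aKernel (d m x y : ℕ) : ℝ :=
  if 2 * d ≤ x + y ∧ y < d then
    ((x - d).choose (d - y) : ℝ) * (1 / ((m : ℝ) - 1)) ^ (d - y)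
      * (1 - 1 / ((m : ℝ) - 1)) ^ (x + y - 2 * d)
  else 0

theorem one_div_sub_one_mem {m : ℕ} (hm : 2 ≤ m) :
    0 ≤ 1 / ((m : ℝ) - 1) ∧ 1 / ((m : ℝ) - 1) ≤ 1 ∧ 1 / ((m : ℝ) - 1) ≤ 2 / m := by
  have h : (2 : ℝ) ≤ m := by exact_mod_cast hm
  refine ⟨div_nonneg zero_le_one (by linarith), ?_, ?_⟩
  · rw [div_le_one (by linarith)]; linarith
  · rw [div_le_div_iff₀ (by linarith) (by linarith)]; linarith

theorem aKernel_nonneg (d : ℕ) {m : ℕ} (hm : 2 ≤ m) (x y : ℕ) : 0 ≤ aKernel d m x y := by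
  obtain ⟨h₀, h₁, -⟩ := one_div_sub_one_mem hm
  have h₂ : 0 ≤ 1 - 1 / ((m : ℝ) - 1) := by linarith
  unfold aKernel
  split_ifs <;> positivity

theorem aKernel_le (d : ℕ) {m : ℕ} (hm : 2 ≤ m) (x y : ℕ) : aKernel d m x y ≤ x * (2 / m) := by
  obtain ⟨h₀, h₁, h₂⟩ := one_div_sub_one_mem hm
  unfold aKernel
  split_ifs with h
  · have hexp : x + y - 2 * d = x - d - (d - y) := by omega
    rw [hexp]
    refine (choose_mul_pow_mul_pow_le h₀ h₁ (by omega) (by omega)).trans ?_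
    gcongr
    omega
  · positivity

/-- The sum of the kernel over all ordered pairs of distinct urns. -/
noncomputable def aSum (d m : ℕ) (M : Fin m → ℕ) : ℝ :=
  ∑ i, ∑ j, if i ≠ j then aKernel d m (M i) (M j) else 0

/-- Lowering the count of the single urn `s` changes `aSum` only a little. -/
theorem abs_aSum_sub_le (d : ℕ) {m : ℕ} (hm : 2 ≤ m) (M M' : Fin m → ℕ) (s : Fin m)
    (hs : M' s ≤ M s) (hne : ∀ i, i ≠ s → M' i = M i) :
    |aSum d m M - aSum d m M'| ≤ 2 * M s + 2 * ((∑ i, (M i : ℝ)) / m) := by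
  have hmR : (0 : ℝ) < m := by exact_mod_cast (by omega : 0 < m)
  have hle (i : Fin m) : M' i ≤ M i := by
    by_cases h : i = s
    · rwa [h]
    · exact (hne i h).le
  have hterm (i j : Fin m) :
      |(if i ≠ j then aKernel d m (M i) (M j) else 0)
        - (if i ≠ j then aKernel d m (M' i) (M' j) else 0)|
      ≤ (if i = s then M s * (2 / (m : ℝ)) else 0) + (if j = s then M i * (2 / (m : ℝ)) else 0) := by
    have hbound : |aKernel d m (M i) (M j) - aKernel d m (M' i) (M' j)| ≤ M i * (2 / m) := by
      have hle' : (M' i : ℝ) * (2 / m) ≤ M i * (2 / m) := by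
        gcongr
        exact hle i
      have := aKernel_nonneg d hm (M i) (M j)
      have := aKernel_nonneg d hm (M' i) (M' j)
      have := aKernel_le d hm (M i) (M j)
      have := aKernel_le d hm (M' i) (M' j)
      rw [abs_le]
      constructor <;> linarith
    have hpos : 0 ≤ (M i : ℝ) * (2 / m) := by positivity
    by_cases hij : i = j
    · simp only [hij, ne_eq, not_true_eq_false, if_false, sub_zero, abs_zero]
      positivity
    · simp only [ne_eq, hij, not_false_eq_true, if_true]
      by_cases hi : i = s
      · subst hi
        rw [if_pos rfl, if_neg (Ne.symm hij), add_zero]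
        exact hbound
      · by_cases hj : j = s
        · rw [if_neg hi, if_pos hj, zero_add]
          exact hbound
        · simp [hi, hj, hne i hi, hne j hj]
  calc |aSum d m M - aSum d m M'|
      = |∑ i, ∑ j, ((if i ≠ j then aKernel d m (M i) (M j) else 0)
          - (if i ≠ j then aKernel d m (M' i) (M' j) else 0))| := by
        simp only [aSum, Finset.sum_sub_distrib]
    _ ≤ ∑ i, ∑ j, ((if i = s then M s * (2 / (m : ℝ)) else 0)
          + (if j = s then M i * (2 / (m : ℝ)) else 0)) :=
        (Finset.abs_sum_le_sum_abs _ _).trans <| Finset.sum_le_sum fun i _ =>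
          (Finset.abs_sum_le_sum_abs _ _).trans <| Finset.sum_le_sum fun j _ => hterm i j
    _ = 2 * M s + 2 * ((∑ i, (M i : ℝ)) / m) := by
        simp only [Finset.sum_add_distrib, Finset.sum_ite_eq', Finset.mem_univ, if_true,
          Finset.sum_const, Finset.card_univ, Fintype.card_fin, nsmul_eq_mul, ← Finset.sum_mul,
          ← Finset.mul_sum]
        field_simp

end Kernel

/-- The number of balls other than `k` in urn `i`. -/
def ballCountErase {n m : ℕ} (k : Fin n) (ω : Fin n → Fin m) (i : Fin m) : ℕ :=
  (Finset.univ.filter fun b => b ≠ k ∧ ω b = i).card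

theorem ballCountErase_update {n m : ℕ} (k : Fin n) (ω : Fin n → Fin m) (a : Fin m) :
    ballCountErase k (Function.update ω k a) = ballCountErase k ω := by
  funext i
  unfold ballCountErase
  congr 1
  refine Finset.filter_congr fun b _ => and_congr_right fun hb => ?_
  rw [Function.update_of_ne hb]

theorem ballCountErase_le {n m : ℕ} (k : Fin n) (ω : Fin n → Fin m) (i : Fin m) :
    ballCountErase k ω i ≤ ballCount ω i :=
  Finset.card_le_card <| Finset.monotone_filter_right _ fun _ _ h => h.2

theorem ballCountErase_of_ne {n m : ℕ} (k : Fin n) (ω : Fin n → Fin m) {i : Fin m}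
    (hi : i ≠ ω k) : ballCountErase k ω i = ballCount ω i := by
  unfold ballCountErase ballCount
  congr 1
  refine Finset.filter_congr fun b _ => and_iff_right_of_imp ?_
  rintro rfl rfl
  exact hi rfl

theorem sum_sq_aSum_sub_le (d : ℕ) {n m : ℕ} (hm : 2 ≤ m) (k : Fin n) :
    ∑ ω : Fin n → Fin m, (aSum d m (ballCount ω) - aSum d m (ballCountErase k ω)) ^ 2
      ≤ (m : ℝ) ^ n * (48 * (1 + ((n : ℝ) / m) ^ 4)) := by
  set t : ℝ := (n : ℝ) / m with ht
  have ht₀ : 0 ≤ t := by positivity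
  have hpoint (ω : Fin n → Fin m) :
      (aSum d m (ballCount ω) - aSum d m (ballCountErase k ω)) ^ 2
        ≤ 8 * (ballCount ω (ω k) : ℝ) ^ 2 + 8 * t ^ 2 := by
    have h := abs_aSum_sub_le d hm (ballCount ω) (ballCountErase k ω) (ω k)
      (ballCountErase_le k ω _) fun i hi => ballCountErase_of_ne k ω hi
    rw [sum_ballCount, ← ht] at h
    have hsq := sq_le_sq' (by linarith [abs_nonneg (aSum d m (ballCount ω)
      - aSum d m (ballCountErase k ω)), (Nat.cast_nonneg (ballCount ω (ω k)) : (0 : ℝ) ≤ _)]) h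
    rw [sq_abs] at hsq
    nlinarith [sq_nonneg ((ballCount ω (ω k) : ℝ) - t)]
  have hN : (0 : ℝ) ≤ (m : ℝ) ^ n := by positivity
  calc _ ≤ ∑ ω : Fin n → Fin m, (8 * (ballCount ω (ω k) : ℝ) ^ 2 + 8 * t ^ 2) :=
        Finset.sum_le_sum fun ω _ => hpoint ω
    _ = 8 * ∑ ω : Fin n → Fin m, (ballCount ω (ω k) : ℝ) ^ 2 + (m : ℝ) ^ n * (8 * t ^ 2) := by
        rw [Finset.sum_add_distrib, ← Finset.mul_sum]
        simp
    _ ≤ 8 * ((m : ℝ) ^ n * ((1 + t) ^ 2 + t)) + (m : ℝ) ^ n * (8 * t ^ 2) := by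
        gcongr
        exact sum_ballCount_sq_le (by omega) k
    _ = (m : ℝ) ^ n * (8 * ((1 + t) ^ 2 + t) + 8 * t ^ 2) := by ring
    _ ≤ _ := by
        refine mul_le_mul_of_nonneg_left ?_ hN
        nlinarith [sq_nonneg (t - 1), sq_nonneg (t ^ 2 - 1)]

section Measure

theorem integral_occ {n m : ℕ} (f : (Fin n → Fin m) → ℝ) :
    ∫ ω, f ω ∂(occ n m) = (∑ ω, f ω) / (m : ℝ) ^ n := by
  rw [occ, integral_smul_measure, integral_countable (by simp)]
  simp [div_eq_inv_mul, Measure.real]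

theorem variance_occ {n m : ℕ} (hm : 0 < m) (f : (Fin n → Fin m) → ℝ) :
    variance f (occ n m)
      = (∑ ω, f ω ^ 2 - (∑ ω, f ω) ^ 2 / (m : ℝ) ^ n) / (m : ℝ) ^ n := by
  have : NeZero m := ⟨hm.ne'⟩
  have : IsProbabilityMeasure (occ n m) := ⟨by
    rw [occ, Measure.smul_apply, Measure.count_univ, smul_eq_mul]
    simp only [ENat.card_eq_coe_fintype_card, ENat.toENNReal_coe]
    exact ENNReal.inv_mul_cancel (by simp [hm.ne']) (by simp)⟩
  rw [variance_eq_sub (MemLp.of_discrete), integral_occ, integral_occ]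
  simp only [Pi.pow_apply]
  field_simp

end Measure

/-- Lemma 3.3, bound (3.14): `Var(Σ_{i≠j} a_{n,m}(i,j)) ≤ C·n·[1 + (n/m)⁴]`. -/
theorem variance_aTerm_sum_le (d : ℕ) (hd : 2 ≤ d) :
    ∃ (n₁ : ℕ) (r₁ C : ℝ), 0 < r₁ ∧ 0 < C ∧
      ∀ n m : ℕ, n₁ ≤ n → 2 ≤ m → r₁ ≤ occR d n m →
        variance (fun ω : Fin n → Fin m =>
            ∑ i : Fin m, ∑ j : Fin m, if i ≠ j then aTerm d n m ω i j else 0)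
          (occ n m)
        ≤ C * n * (1 + ((n : ℝ) / m) ^ 4) := by
  refine ⟨0, 1, 48, one_pos, by norm_num, fun n m _ hm _ => ?_⟩
  have hm₀ : 0 < m := by omega
  have hN : (0 : ℝ) < (m : ℝ) ^ n := by positivity
  change variance (fun ω : Fin n → Fin m => aSum d m (ballCount ω)) (occ n m) ≤ _
  rw [variance_occ hm₀, div_le_iff₀ hN]
  refine (sum_sq_sub_sq_sum_div_le hm₀ n _ (fun k ω => aSum d m (ballCountErase k ω))
    fun k ω a => by rw [ballCountErase_update]).trans ?_
  refine (Finset.sum_le_sum fun k _ => sum_sq_aSum_sub_le d hm k).trans_eq ?_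
  simp only [Finset.sum_const, Finset.card_univ, Fintype.card_fin, nsmul_eq_mul]
  ring
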